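/- Fix integers m ≥ 1, s ≥ 2 and d ≥ 2s−1. Then σ_{s,d−s+2}(X_{m,d}) ≠ ∅; moreover this is witnessed by points in the span of ν_d(L) for a line L ⊂ ℙ^m: for any line L ⊂ ℙ^m and any P ∈ ⟨ν_d(L)⟩, the symmetric rank and border rank of P with respect to X_{m,d} coincide with those computed with respect to the rational normal curve ν_d(L) ≅ X_{1,d}. -/

import Mathlib

open scoped LinearAlgebra.Projectivization

noncomputable section

/-- The polynomial ring in `m+1` variables over `K`: homogeneous coordinate ring of `ℙ^m`. -/
abbrev PR (K : Type) [Field K] (m : ℕ) : Type := MvPolynomial (Fin (m+1)) K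

/-- The space of degree-`d` forms in `m+1` variables. -/
abbrev Hd (K : Type) [Field K] (m d : ℕ) : Submodule K (PR K m) :=
  MvPolynomial.homogeneousSubmodule (Fin (m+1)) K d

/-- Projective `m`-space over `K`. -/
abbrev Pm (K : Type) [Field K] (m : ℕ) := ℙ K (Fin (m+1) → K)

/-- The target projective space `ℙ^n`, `n = C(m+d,m) - 1`, of the degree-`d` Veronese
embedding, realized as the projectivization of the dual of the space of degree-`d` forms
(the space of degree-`d` symmetric tensors). -/
abbrev PN (K : Type) [Field K] (m d : ℕ) := ℙ K (Module.Dual K (Hd K m d))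

variable {K : Type} [Field K] {m : ℕ}

/-- Hilbert function of `R/I` in degree `t`. -/
def hilbQ (I : Ideal (PR K m)) (t : ℕ) : ℕ :=
  Module.finrank K ((Hd K m t).map (Ideal.Quotient.mkₐ K I).toLinearMap)

/-- The degree (length) of the projective scheme defined by `I`: the eventual value of the
Hilbert function of `R/I`. -/
def idealDeg (I : Ideal (PR K m)) : ℕ := Filter.limsup (fun t => hilbQ I t) Filter.atTop

/-- `h^1(𝓘_Z(d))` for the zero-dimensional scheme `Z` with (saturated) ideal `I`:
it equals `deg Z - dim (R/I)_d`. -/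
def h1I (I : Ideal (PR K m)) (d : ℕ) : ℕ := idealDeg I - hilbQ I d

/-- An ideal is homogeneous. -/
def IsHomogI (I : Ideal (PR K m)) : Prop :=
  ∀ f ∈ I, ∀ n : ℕ, MvPolynomial.homogeneousComponent n f ∈ I

/-- An ideal is saturated with respect to the irrelevant maximal ideal. -/
def IsSatI (I : Ideal (PR K m)) : Prop :=
  ∀ f : PR K m, (∀ i, MvPolynomial.X i * f ∈ I) → f ∈ I

/-- A closed subscheme of `ℙ^m`, given by its saturated homogeneous ideal. -/
structure PSub (K : Type) [Field K] (m : ℕ) where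
  I : Ideal (PR K m)
  homog : IsHomogI I
  sat : IsSatI I

/-- A (closed sub)scheme is zero-dimensional iff the Hilbert function of `R/I` is bounded. -/
def IsZeroDimI (I : Ideal (PR K m)) : Prop := ∃ C, ∀ t, hilbQ I t ≤ C

/-- A polynomial vanishes at a projective point (every homogeneous component vanishes
at a representative). -/
def vanishesAt (f : PR K m) (a : Pm K m) : Prop :=
  ∀ n : ℕ, MvPolynomial.eval a.rep (MvPolynomial.homogeneousComponent n f) = 0

/-- Zero locus of an ideal in `ℙ^m`. -/
def pzeroLocus (I : Ideal (PR K m)) : Set (Pm K m) := {a | ∀ f ∈ I, vanishesAt f a}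

/-- The (saturated) homogeneous ideal of a set of points of `ℙ^m`. -/
def idealOfSet (S : Set (Pm K m)) : Ideal (PR K m) :=
  Ideal.span {f : PR K m | (∃ n, f.IsHomogeneous n) ∧ ∀ a ∈ S, MvPolynomial.eval a.rep f = 0}

/-- Saturation of a homogeneous ideal: the smallest saturated homogeneous ideal containing it. -/
def satIdeal (J : Ideal (PR K m)) : Ideal (PR K m) := sInf {J' | J ≤ J' ∧ IsHomogI J' ∧ IsSatI J'}

/-- The scheme defined by the (saturated) ideal `I` is reduced. -/
def IsReducedI (I : Ideal (PR K m)) : Prop := I = idealOfSet (pzeroLocus I)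

/-- Connected component of a zero-dimensional scheme at a point `a`: the largest subscheme
supported at `a`, i.e. the `a`-primary component. -/
def componentAt (I : Ideal (PR K m)) (a : Pm K m) : Ideal (PR K m) :=
  sInf {J | I ≤ J ∧ IsHomogI J ∧ IsSatI J ∧ pzeroLocus J ⊆ {a}}

/-- Residual scheme of `Z` with respect to the hypersurface `f = 0`: the colon ideal `(I_Z : f)`. -/
def resIdeal (I : Ideal (PR K m)) (f : PR K m) : Ideal (PR K m) :=
  Submodule.colon I (Ideal.span {f})

/-- Degree of the scheme-theoretic intersection of the subschemes defined by `I` and `J`. -/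
def interDeg (I J : Ideal (PR K m)) : ℕ := idealDeg (I ⊔ J)

/-- The degree-`d` Veronese image of a vector `v`: the evaluation-at-`v` functional on
degree-`d` forms. -/
def nu (d : ℕ) (v : Fin (m+1) → K) : Module.Dual K (Hd K m d) :=
  (MvPolynomial.aeval v).toLinearMap ∘ₗ (Hd K m d).subtype

/-- The linear span of the Veronese image `ν_d(S)` of a set `S` of points of `ℙ^m`. -/
def dualSpan (d : ℕ) (S : Set (Pm K m)) : Submodule K (Module.Dual K (Hd K m d)) :=
  Submodule.span K ((fun a => nu d a.rep) '' S)

/-- The linear span `⟨ν_d(Z)⟩` of the Veronese image of the subscheme with ideal `I`: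
the annihilator of the degree-`d` part of `I`. -/
def schemeSpanSub (I : Ideal (PR K m)) (d : ℕ) : Submodule K (Module.Dual K (Hd K m d)) where
  carrier := {φ | ∀ f : Hd K m d, (f : PR K m) ∈ I → φ f = 0}
  add_mem' := by
    intro a b ha hb f hf
    simp [LinearMap.add_apply, ha f hf, hb f hf]
  zero_mem' := by intro f hf; simp
  smul_mem' := by
    intro c a ha f hf
    simp [LinearMap.smul_apply, ha f hf]

/-- `P ∈ ⟨ν_d(Z)⟩`, for `Z` the subscheme with ideal `I`. -/
def inSpanI (I : Ideal (PR K m)) (d : ℕ) (P : PN K m d) : Prop := P.rep ∈ schemeSpanSub I d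

/-- `P ∈ ⟨ν_d(S)⟩` for a set `S` of points of `ℙ^m`. -/
def inSpanSet (d : ℕ) (S : Set (Pm K m)) (P : PN K m d) : Prop := P.rep ∈ dualSpan d S

/-- `L` is a linear subspace of `ℙ^m`. -/
def IsLinearSub (L : Set (Pm K m)) : Prop :=
  ∃ W : Submodule K (Fin (m+1) → K), L = {a | a.submodule ≤ W}

/-- `L` is a line of `ℙ^m`. -/
def IsLine (L : Set (Pm K m)) : Prop :=
  ∃ W : Submodule K (Fin (m+1) → K), Module.finrank K W = 2 ∧ L = {a | a.submodule ≤ W}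

/-- `L` is a plane of `ℙ^m`. -/
def IsPlane (L : Set (Pm K m)) : Prop :=
  ∃ W : Submodule K (Fin (m+1) → K), Module.finrank K W = 3 ∧ L = {a | a.submodule ≤ W}

/-- `J` is the (saturated homogeneous) ideal of a conic of `ℙ^m`: a degree-2 curve contained
in a plane (possibly reducible). -/
def IsConic (J : Ideal (PR K m)) : Prop :=
  ∃ (W : Submodule K (Fin (m+1) → K)) (q : PR K m),
    Module.finrank K W = 3 ∧ q.IsHomogeneous 2 ∧
    q ∉ idealOfSet {a : Pm K m | a.submodule ≤ W} ∧
    J = satIdeal (idealOfSet {a : Pm K m | a.submodule ≤ W} ⊔ Ideal.span {q})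

/-- The algebra of polynomial functions on a `K`-vector space. -/
def polyFunctions (K V : Type) [Field K] [AddCommGroup V] [Module K V] : Subalgebra K (V → K) :=
  Algebra.adjoin K {g : V → K | ∃ φ : V →ₗ[K] K, g = ⇑φ}

/-- Zariski closure of a subset of a projective space. -/
def zClosure {V : Type} [AddCommGroup V] [Module K V] (T : Set (ℙ K V)) : Set (ℙ K V) :=
  {P | ∀ F ∈ polyFunctions K V, (∀ Q ∈ T, ∀ c : K, F (c • Q.rep) = 0) →
    ∀ c : K, F (c • P.rep) = 0}

/-- The Veronese variety `X_{m,d} = ν_d(ℙ^m)` as a subset of `PN K m d`. -/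
def XSet (K : Type) [Field K] (m d : ℕ) : Set (PN K m d) :=
  {Q | ∃ a : Pm K m, Q.submodule = Submodule.span K {nu d a.rep}}

/-- The image `ν_d(S)` of a set of points of `ℙ^m`, as a subset of `PN K m d`. -/
def nuSet (d : ℕ) (S : Set (Pm K m)) : Set (PN K m d) :=
  {Q | ∃ a ∈ S, Q.submodule = Submodule.span K {nu d a.rep}}

/-- The rank of a point `P` of `PN` with respect to a subset `Y ⊆ PN`. -/
def rankWrt {m d : ℕ} (Y : Set (PN K m d)) (P : PN K m d) : ℕ :=
  sInf {r | ∃ S : Finset (PN K m d), ↑S ⊆ Y ∧ S.card = r ∧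
    P.rep ∈ Submodule.span K (Projectivization.rep '' (S : Set (PN K m d)))}

/-- The `s`-th secant variety of `Y ⊆ PN`: the Zariski closure of the union of the spans
of `s` points of `Y`. -/
def secantWrt {m d : ℕ} (Y : Set (PN K m d)) (s : ℕ) : Set (PN K m d) :=
  zClosure {Q | ∃ S : Finset (PN K m d), ↑S ⊆ Y ∧ S.card ≤ s ∧
    Q.rep ∈ Submodule.span K (Projectivization.rep '' (S : Set (PN K m d)))}

/-- The border rank of `P` with respect to `Y ⊆ PN`. -/
def brankWrt {m d : ℕ} (Y : Set (PN K m d)) (P : PN K m d) : ℕ :=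
  sInf {s | 0 < s ∧ P ∈ secantWrt Y s}

/-- Symmetric rank. -/
def srank {m : ℕ} (d : ℕ) (P : PN K m d) : ℕ := rankWrt (XSet K m d) P

/-- Border rank. -/
def brank {m : ℕ} (d : ℕ) (P : PN K m d) : ℕ := brankWrt (XSet K m d) P

/-- Cactus rank: minimal degree of a zero-dimensional closed subscheme `E ⊂ ℙ^m` with
`P ∈ ⟨ν_d(E)⟩`. -/
def crank {m : ℕ} (d : ℕ) (P : PN K m d) : ℕ :=
  sInf {c | ∃ Z : PSub K m, IsZeroDimI Z.I ∧ idealDeg Z.I = c ∧ inSpanI Z.I d P}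

/-- `σ_{s,r}(X_{m,d})`. -/
def sigmaSet (K : Type) [Field K] (m d s r : ℕ) : Set (PN K m d) :=
  {P | brank d P = s ∧ srank d P = r}

/-- A property `Φ` holds for a general `k`-tuple of points of the linear subspace of `ℙ^m`
determined by `W`. -/
def GenerallyOn (W : Submodule K (Fin (m+1) → K)) (k : ℕ)
    (Φ : (Fin k → Pm K m) → Prop) : Prop :=
  ∃ w : Fin 3 → W, Submodule.span K (Set.range fun j => (w j : Fin (m+1) → K)) = W ∧
    ∃ F : MvPolynomial (Fin k × Fin 3) K, F ≠ 0 ∧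
      ∀ c : Fin k → Fin 3 → K,
        MvPolynomial.eval (fun p => c p.1 p.2) F ≠ 0 →
        ∀ e : Fin k → Pm K m,
          (∀ i, (e i).submodule = Submodule.span K {∑ j, c i j • (w j : Fin (m+1) → K)}) → Φ e

end

section helpers

variable {K : Type} [Field K] {m : ℕ}

lemma nu_apply (d : ℕ) (v : Fin (m+1) → K) (f : Hd K m d) :
    nu d v f = MvPolynomial.aeval v (f : PR K m) := rfl

lemma nu_smul (d : ℕ) (c : K) (v : Fin (m+1) → K) : nu d (c • v) = c ^ d • nu d v := by
  ext f
  have hf : (f : PR K m).IsHomogeneous d := f.2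
  rw [LinearMap.smul_apply, nu_apply, nu_apply, smul_eq_mul, MvPolynomial.aeval_eq_eval, MvPolynomial.aeval_eq_eval]
  rw [MvPolynomial.eval_eq, MvPolynomial.eval_eq, Finset.mul_sum]
  refine Finset.sum_congr rfl fun n hn => ?_
  have h1 : ∑ i ∈ n.support, n i = d := by
    have := hf (MvPolynomial.mem_support_iff.1 hn)
    rw [← this, Finsupp.weight_apply, Finsupp.sum]
    simp
  simp only [Pi.smul_apply, smul_eq_mul, mul_pow, Finset.prod_mul_distrib,
    Finset.prod_pow_eq_pow_sum, h1]
  ring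

lemma nu_ne_zero (d : ℕ) (v : Fin (m+1) → K) (hv : v ≠ 0) : nu d v ≠ 0 := by
  obtain ⟨i, hi⟩ := Function.ne_iff.1 hv
  intro h
  have := LinearMap.congr_fun h ⟨MvPolynomial.X i ^ d, by
    simpa using (MvPolynomial.isHomogeneous_X K i).pow d⟩
  rw [nu_apply] at this
  simp at this
  exact hi this.1

/-- the linear subspace of `ℙ^m` attached to `W` -/
noncomputable def Lof (W : Submodule K (Fin (m+1) → K)) : Set (Pm K m) := {a | a.submodule ≤ W}

lemma rep_mem_of_Lof {W : Submodule K (Fin (m+1) → K)} {a : Pm K m} (h : a ∈ Lof W) :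
    a.rep ∈ W := by
  apply h
  rw [Projectivization.submodule_eq]
  exact Submodule.mem_span_singleton_self _

lemma XSet_eq (d : ℕ) : XSet K m d = nuSet d (Lof ⊤) := by
  ext Q; simp [XSet, nuSet, Lof]

lemma exists_of_nuSet {d : ℕ} {W : Submodule K (Fin (m+1) → K)} {Q : PN K m d}
    (h : Q ∈ nuSet d (Lof W)) : ∃ v ∈ W, ∃ c : K, Q.rep = c • nu d v := by
  obtain ⟨a, ha, hQ⟩ := h
  refine ⟨a.rep, rep_mem_of_Lof ha, ?_⟩
  have : Q.rep ∈ Q.submodule := by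
    rw [Projectivization.submodule_eq]
    exact Submodule.mem_span_singleton_self _
  rw [hQ, Submodule.mem_span_singleton] at this
  obtain ⟨c, hc⟩ := this
  exact ⟨c, hc.symm⟩

lemma span_nu_mk (d : ℕ) (v : Fin (m+1) → K) (hv : v ≠ 0) :
    Submodule.span K {nu d (Projectivization.mk K v hv).rep} = Submodule.span K {nu d v} := by
  obtain ⟨c, hc⟩ := Projectivization.exists_smul_eq_mk_rep K v hv
  rw [← hc, Units.smul_def, nu_smul]
  exact Submodule.span_singleton_smul_eq (IsUnit.pow d c.isUnit) _

lemma mk_mem_Lof {W : Submodule K (Fin (m+1) → K)} {v : Fin (m+1) → K} (hv : v ≠ 0)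
    (hW : v ∈ W) : Projectivization.mk K v hv ∈ Lof W := by
  simpa [Lof, Projectivization.submodule_mk] using hW

lemma nu_mem_dualSpan {d : ℕ} {W : Submodule K (Fin (m+1) → K)} {v : Fin (m+1) → K} (hv : v ≠ 0)
    (hW : v ∈ W) : nu d v ∈ dualSpan d (Lof W) := by
  have h1 : nu d v ∈ Submodule.span K {nu d (Projectivization.mk K v hv).rep} := by
    rw [span_nu_mk]; exact Submodule.mem_span_singleton_self _
  refine Submodule.span_mono ?_ h1
  rw [Set.singleton_subset_iff]
  exact ⟨_, mk_mem_Lof hv hW, rfl⟩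

lemma mk_rep_mem {V : Type} [AddCommGroup V] [Module K V] {x : V} (hx : x ≠ 0)
    (N : Submodule K V) (h : x ∈ N) : (Projectivization.mk K x hx).rep ∈ N := by
  obtain ⟨c, hc⟩ := Projectivization.exists_smul_eq_mk_rep K x hx
  rw [← hc, Units.smul_def]
  exact N.smul_mem _ h

lemma eq_smul_mk_rep {V : Type} [AddCommGroup V] [Module K V] {x : V} (hx : x ≠ 0) :
    ∃ c : K, x = c • (Projectivization.mk K x hx).rep := by
  obtain ⟨c, hc⟩ := Projectivization.exists_smul_eq_mk_rep K x hx
  refine ⟨((c⁻¹ : Kˣ) : K), ?_⟩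
  rw [← hc, ← Units.smul_def, inv_smul_smul]

lemma mem_of_mk_rep_mem {V : Type} [AddCommGroup V] [Module K V] {x : V} (hx : x ≠ 0)
    (N : Submodule K V) (h : (Projectivization.mk K x hx).rep ∈ N) : x ∈ N := by
  obtain ⟨c, hc⟩ := eq_smul_mk_rep (K := K) hx
  have h2 := N.smul_mem c h
  rwa [← hc] at h2

/-- points of `⟨ν(v k)⟩` -/
lemma exists_finset {d : ℕ} (hd : d ≠ 0) (W : Submodule K (Fin (m+1) → K)) {ι : Type*}
    (I : Finset ι) (v : ι → (Fin (m+1) → K)) (hv : ∀ k ∈ I, v k ∈ W) :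
    ∃ S : Finset (PN K m d), ↑S ⊆ nuSet d (Lof W) ∧ S.card ≤ I.card ∧
      ∀ k ∈ I, nu d (v k) ∈ Submodule.span K (Projectivization.rep '' (S : Set (PN K m d))) := by
  classical
  induction I using Finset.induction_on with
  | empty => exact ⟨∅, by simp, by simp, by simp⟩
  | insert i I hi ih =>
    obtain ⟨S, h1, h2, h3⟩ := ih (fun k hk => hv k (Finset.mem_insert_of_mem hk))
    by_cases h0 : v i = 0
    · refine ⟨S, h1, ?_, ?_⟩
      · rw [Finset.card_insert_of_notMem hi]; omega
      · intro k hk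
        rcases Finset.mem_insert.1 hk with rfl | hk
        · have : v k = (0 : K) • v k := by rw [h0]; simp
          rw [this, nu_smul, zero_pow hd, zero_smul]
          exact Submodule.zero_mem _
        · exact h3 k hk
    · refine ⟨insert (Projectivization.mk K (nu d (v i)) (nu_ne_zero d _ h0)) S, ?_, ?_, ?_⟩
      · rw [Finset.coe_insert, Set.insert_subset_iff]
        refine ⟨⟨Projectivization.mk K (v i) h0, mk_mem_Lof h0 (hv i (by simp)), ?_⟩, h1⟩
        rw [span_nu_mk, Projectivization.submodule_mk]
      · rw [Finset.card_insert_of_notMem hi]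
        exact (Finset.card_insert_le _ _).trans (by omega)
      · intro k hk
        rcases Finset.mem_insert.1 hk with rfl | hk
        · refine mem_of_mk_rep_mem (nu_ne_zero d _ h0) _ (Submodule.subset_span ⟨_, ?_, rfl⟩)
          simp
        · refine Submodule.span_mono ?_ (h3 k hk)
          apply Set.image_mono
          simp

/-- pullback of forms along a linear endomorphism, dualised -/
lemma exists_push (d : ℕ) (p : (Fin (m+1) → K) →ₗ[K] (Fin (m+1) → K)) :
    ∃ Q : Module.Dual K (Hd K m d) →ₗ[K] Module.Dual K (Hd K m d),
      ∀ v, Q (nu d v) = nu d (p v) := by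
  let g : Fin (m+1) → PR K m := fun i =>
    ∑ j, MvPolynomial.C (p (Pi.single j 1) i) * MvPolynomial.X j
  have hg : ∀ i, (g i).IsHomogeneous 1 := by
    intro i
    refine MvPolynomial.IsHomogeneous.sum _ _ _ fun j _ => ?_
    simpa using (MvPolynomial.isHomogeneous_C (Fin (m+1)) (p (Pi.single j 1) i)).mul
      (MvPolynomial.isHomogeneous_X K j)
  let A : Hd K m d →ₗ[K] Hd K m d :=
    LinearMap.codRestrict (Hd K m d) ((MvPolynomial.aeval g).toLinearMap ∘ₗ (Hd K m d).subtype)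
      (fun f => by
        have : (f : PR K m).IsHomogeneous d := f.2
        simpa using this.aeval g hg)
  refine ⟨A.dualMap, fun v => ?_⟩
  ext f
  rw [LinearMap.dualMap_apply, nu_apply, nu_apply]
  have : ((A f : Hd K m d) : PR K m) = MvPolynomial.aeval g (f : PR K m) := rfl
  rw [this]
  have hc : (MvPolynomial.aeval v).comp (MvPolynomial.aeval g) =
      (MvPolynomial.aeval (p v) : PR K m →ₐ[K] K) := by
    apply MvPolynomial.algHom_ext
    intro i
    simp only [AlgHom.comp_apply, MvPolynomial.aeval_X, g, map_sum, map_mul,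
      MvPolynomial.algHom_C, Algebra.algebraMap_self, RingHom.id_apply]
    conv_rhs => rw [← Finset.univ_sum_single v, map_sum]
    rw [Finset.sum_apply]
    refine Finset.sum_congr rfl fun j _ => ?_
    have h1 : (Pi.single j (v j) : Fin (m+1) → K) = v j • Pi.single j 1 := by
      rw [← Pi.single_smul]; simp
    rw [h1, map_smul, Pi.smul_apply, smul_eq_mul, mul_comm]
  rw [← hc]; rfl

lemma nuSet_mono {d : ℕ} {A B : Set (Pm K m)} (h : A ⊆ B) : nuSet d A ⊆ nuSet d B :=
  fun _ ⟨a, ha, hq⟩ => ⟨a, h ha, hq⟩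

lemma polyFunctions_comp {V : Type} [AddCommGroup V] [Module K V] (Q : V →ₗ[K] V) {F : V → K}
    (hF : F ∈ polyFunctions K V) : (fun x => F (Q x)) ∈ polyFunctions K V := by
  unfold polyFunctions at hF
  induction hF using Algebra.adjoin_induction with
  | mem x hx =>
    obtain ⟨φ, rfl⟩ := hx
    exact Algebra.subset_adjoin ⟨φ ∘ₗ Q, rfl⟩
  | algebraMap r => exact Subalgebra.algebraMap_mem _ r
  | add x y _ _ h1 h2 => exact Subalgebra.add_mem _ h1 h2
  | mul x y _ _ h1 h2 => exact Subalgebra.mul_mem _ h1 h2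

lemma zClosure_mono {V : Type} [AddCommGroup V] [Module K V] {A B : Set (ℙ K V)} (h : A ⊆ B) :
    zClosure A ⊆ zClosure B :=
  fun _ hP F hF hB => hP F hF (fun Q hQ => hB Q (h hQ))

lemma push_finset {d : ℕ} (hd : d ≠ 0) {W : Submodule K (Fin (m+1) → K)}
    {p : (Fin (m+1) → K) →ₗ[K] (Fin (m+1) → K)} (hp : ∀ v, p v ∈ W)
    {Q : Module.Dual K (Hd K m d) →ₗ[K] Module.Dual K (Hd K m d)}
    (hQ : ∀ v, Q (nu d v) = nu d (p v)) (S : Finset (PN K m d)) (hS : ↑S ⊆ XSet K m d) :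
    ∃ S' : Finset (PN K m d), ↑S' ⊆ nuSet d (Lof W) ∧ S'.card ≤ S.card ∧
      ∀ x ∈ Submodule.span K (Projectivization.rep '' (S : Set (PN K m d))),
        Q x ∈ Submodule.span K (Projectivization.rep '' (S' : Set (PN K m d))) := by
  classical
  have hS' : ∀ q : PN K m d, ∃ v : Fin (m+1) → K, q ∈ S → ∃ c : K, q.rep = c • nu d v := by
    intro q
    by_cases hq : q ∈ S
    · have := hS hq
      rw [XSet_eq] at this
      obtain ⟨v, -, c, h⟩ := exists_of_nuSet this
      exact ⟨v, fun _ => ⟨c, h⟩⟩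
    · exact ⟨0, fun h => absurd h hq⟩
  choose v hv using hS'
  obtain ⟨S', h1, h2, h3⟩ := exists_finset hd W S (fun q => p (v q)) (fun q _ => hp _)
  refine ⟨S', h1, h2, ?_⟩
  intro x hx
  have : Submodule.span K (Projectivization.rep '' (S : Set (PN K m d))) ≤
      (Submodule.span K (Projectivization.rep '' (S' : Set (PN K m d)))).comap Q := by
    rw [Submodule.span_le]
    rintro _ ⟨q, hq, rfl⟩
    obtain ⟨c, hc⟩ := hv q hq
    simp only [Submodule.comap_coe, Set.mem_preimage, SetLike.mem_coe]
    rw [hc, map_smul, hQ]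
    exact Submodule.smul_mem _ _ (h3 q hq)
  exact this hx

lemma part2 {d : ℕ} (hd : d ≠ 0) (L : Set (Pm K m)) (hL : IsLine L) (P : PN K m d)
    (hP : inSpanSet d L P) :
    srank d P = rankWrt (nuSet d L) P ∧ brank d P = brankWrt (nuSet d L) P := by
  classical
  obtain ⟨W, hW2, hLW⟩ := hL
  change L = Lof W at hLW
  subst hLW
  obtain ⟨p, hpW, hpid⟩ : ∃ p : (Fin (m+1) → K) →ₗ[K] (Fin (m+1) → K),
      (∀ v, p v ∈ W) ∧ ∀ v ∈ W, p v = v := by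
    obtain ⟨g, hg⟩ := W.subtype.exists_leftInverse_of_injective W.ker_subtype
    refine ⟨W.subtype ∘ₗ g, fun v => (g v).2, fun v hv => ?_⟩
    have := LinearMap.congr_fun hg ⟨v, hv⟩
    simp at this
    simp [this]
  obtain ⟨Q, hQ⟩ := exists_push d p
  have hQP : Q P.rep = P.rep := by
    have : dualSpan d (Lof W) ≤ LinearMap.eqLocus Q LinearMap.id := by
      unfold dualSpan
      rw [Submodule.span_le]
      rintro _ ⟨a, ha, rfl⟩
      simp only [SetLike.mem_coe, LinearMap.mem_eqLocus, LinearMap.id_apply]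
      rw [hQ, hpid _ (rep_mem_of_Lof ha)]
    exact this hP
  have hsub : nuSet d (Lof W) ⊆ XSet K m d := by
    rw [XSet_eq]; exact nuSet_mono (fun a _ => by simp [Lof])
  constructor
  · -- rank
    have hne : {r | ∃ S : Finset (PN K m d), ↑S ⊆ nuSet d (Lof W) ∧ S.card = r ∧
        P.rep ∈ Submodule.span K (Projectivization.rep '' (S : Set (PN K m d)))}.Nonempty := by
      obtain ⟨T, hT, hPT⟩ := Submodule.mem_span_finite_of_mem_span hP
      obtain ⟨T', hT', rfl⟩ := Finset.subset_set_image_iff.1 hT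
      obtain ⟨S, h1, h2, h3⟩ := exists_finset hd W T' (fun a => a.rep)
        (fun a ha => rep_mem_of_Lof (hT' ha))
      refine ⟨S.card, S, h1, rfl, ?_⟩
      refine Submodule.span_le.2 ?_ hPT
      intro x hx
      obtain ⟨a, ha, rfl⟩ := Finset.mem_image.1 hx
      exact h3 a ha
    apply le_antisymm
    · obtain ⟨S, h1, h2, h3⟩ := Nat.sInf_mem hne
      exact Nat.sInf_le ⟨S, h1.trans hsub, h2, h3⟩
    · have hne2 : {r | ∃ S : Finset (PN K m d), ↑S ⊆ XSet K m d ∧ S.card = r ∧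
        P.rep ∈ Submodule.span K (Projectivization.rep '' (S : Set (PN K m d)))}.Nonempty := by
        obtain ⟨r, S, h1, h2, h3⟩ := hne
        exact ⟨r, S, h1.trans hsub, h2, h3⟩
      obtain ⟨S, h1, h2, h3⟩ := Nat.sInf_mem hne2
      obtain ⟨S', h1', h2', h3'⟩ := push_finset hd hpW hQ S h1
      have : rankWrt (nuSet d (Lof W)) P ≤ S'.card :=
        Nat.sInf_le ⟨S', h1', rfl, by have := h3' _ h3; rwa [hQP] at this⟩
      exact this.trans (h2'.trans h2.le)
  · -- border rank
    unfold brank brankWrt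
    congr 1
    ext s
    refine and_congr_right fun hs => ⟨fun h => ?_, fun h => ?_⟩
    · intro F hF hT c
      have key := h (fun x => F (Q x)) (polyFunctions_comp Q hF) ?_ c
      · simpa [hQP] using key
      rintro q ⟨S, h1, h2, h3⟩ c
      obtain ⟨S', h1', h2', h3'⟩ := push_finset hd hpW hQ S h1
      have hy := Submodule.smul_mem _ c (h3' _ h3)
      simp only [map_smul]
      by_cases h0 : c • Q q.rep = 0
      · rw [h0]
        obtain ⟨w, hw⟩ : ∃ w : W, w ≠ 0 := by
          have : Nontrivial W := Module.nontrivial_of_finrank_pos (R := K) (by omega)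
          exact exists_ne 0
        have hw' : (w : Fin (m+1) → K) ≠ 0 := by simpa using hw
        obtain ⟨S0, g1, g2, g3⟩ := exists_finset hd W {(w : Fin (m+1) → K)} id (by simp)
        have := hT (Projectivization.mk K (nu d w) (nu_ne_zero d _ hw')) ⟨S0, g1, ?_, ?_⟩ 0
        · simpa using this
        · simp at g2; omega
        · exact mk_rep_mem _ _ (g3 _ (by simp))
      · obtain ⟨e, he⟩ := eq_smul_mk_rep (K := K) h0
        rw [he]
        exact hT (Projectivization.mk K _ h0) ⟨S', h1', h2'.trans h2, mk_rep_mem h0 _ hy⟩ e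
    · refine zClosure_mono ?_ h
      rintro q ⟨S, h1, h2, h3⟩
      exact ⟨S, h1.trans hsub, h2, h3⟩

/-- restriction of forms to the line, dehomogenised -/
noncomputable def rho (K : Type) [Field K] (m : ℕ) : PR K m →ₐ[K] Polynomial K :=
  MvPolynomial.aeval (fun i => if i = 0 then 1 else if i = 1 then Polynomial.X else 0)

noncomputable def phi (K : Type) [Field K] (m d j : ℕ) : Module.Dual K (Hd K m d) :=
  (Polynomial.lcoeff K j) ∘ₗ (rho K m).toLinearMap ∘ₗ (Hd K m d).subtype

lemma phi_apply (d j : ℕ) (f : Hd K m d) : phi K m d j f = (rho K m (f : PR K m)).coeff j := rfl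

noncomputable def vt (m : ℕ) (t : K) : Fin (m+1) → K := fun i => if i = 0 then 1 else if i = 1 then t else 0

lemma vt_ne_zero (t : K) : vt m t ≠ 0 := by
  intro h
  have := congrFun h 0
  simp [vt] at this

lemma nu_vt (d : ℕ) (t : K) :
    nu d (vt m t) = ∑ j ∈ Finset.range (d+1), t ^ j • phi K m d j := by
  ext f
  have hdeg : (rho K m (f : PR K m)).natDegree < d + 1 := by
    have hf : (f : PR K m).IsHomogeneous d := f.2
    have := MvPolynomial.aeval_natDegree_le (m := d) (n := 1) (f : PR K m) hf.totalDegree_le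
      (fun i : Fin (m+1) => if i = 0 then (1 : Polynomial K) else if i = 1 then Polynomial.X else 0)
      (by intro i; split_ifs <;> simp)
    unfold rho
    omega
  have hc : (Polynomial.aeval t).comp (rho K m) = (MvPolynomial.aeval (vt m t) : PR K m →ₐ[K] K) := by
    apply MvPolynomial.algHom_ext
    intro i
    simp only [AlgHom.comp_apply, MvPolynomial.aeval_X, rho, vt]
    split_ifs <;> simp
  rw [nu_apply, ← hc, AlgHom.comp_apply, Polynomial.coe_aeval_eq_eval,
    Polynomial.eval_eq_sum_range' hdeg]
  simp [phi_apply, mul_comm]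

lemma geom_root [CharZero K] {N : ℕ} {ζ : K} (hζ : IsPrimitiveRoot ζ N) (e : ℕ) :
    ∑ k ∈ Finset.range N, (ζ ^ k) ^ e = if N ∣ e then (N : K) else 0 := by
  have h1 : ∀ k, (ζ ^ k) ^ e = (ζ ^ e) ^ k := fun k => by rw [← pow_mul, ← pow_mul, mul_comm]
  simp only [h1]
  split_ifs with h
  · rw [(hζ.pow_eq_one_iff_dvd e).2 h]; simp
  · have hne : ζ ^ e ≠ 1 := fun h' => h ((hζ.pow_eq_one_iff_dvd e).1 h')
    rw [geom_sum_eq hne, ← pow_mul, mul_comm, pow_mul, hζ.pow_eq_one]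
    simp

lemma sum_nu [CharZero K] (d : ℕ) {N a : ℕ} {ζ : K} (hζ : IsPrimitiveRoot ζ N) (t : K) :
    ∑ k ∈ Finset.range N, (ζ ^ k) ^ (N - a) • nu d (vt m (t * ζ ^ k)) =
      ∑ j ∈ Finset.range (d+1), (if N ∣ j + (N - a) then (N : K) * t ^ j else 0) • phi K m d j := by
  simp only [nu_vt, Finset.smul_sum, smul_smul]
  rw [Finset.sum_comm]
  refine Finset.sum_congr rfl fun j _ => ?_
  rw [← Finset.sum_smul]
  congr 1
  have := geom_root hζ (j + (N - a))
  calc _ = t ^ j * ∑ k ∈ Finset.range N, (ζ ^ k) ^ (j + (N - a)) := by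
        rw [Finset.mul_sum]
        refine Finset.sum_congr rfl fun k _ => ?_
        rw [mul_pow, pow_add]; ring
    _ = _ := by rw [this]; split_ifs <;> ring

lemma dvd_aux {N a j : ℕ} (ha : a < N) (h : N ∣ j + (N - a)) : ∃ l, j = a + N * l := by
  obtain ⟨q, hq⟩ := h
  rcases q with _ | q
  · omega
  · refine ⟨q, ?_⟩
    rw [mul_add] at hq
    omega

noncomputable def mono (K : Type) [Field K] (m d k : ℕ) : Hd K m d :=
  if h : k ≤ d then ⟨MvPolynomial.X 0 ^ (d - k) * MvPolynomial.X 1 ^ k, by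
    have := ((MvPolynomial.isHomogeneous_X K (0 : Fin (m+1))).pow (d - k)).mul
      ((MvPolynomial.isHomogeneous_X K (1 : Fin (m+1))).pow k)
    rw [one_mul, one_mul, Nat.sub_add_cancel h] at this
    exact this⟩ else 0

lemma mono_coe {d k : ℕ} (h : k ≤ d) : (mono K m d k : PR K m) =
    MvPolynomial.X 0 ^ (d - k) * MvPolynomial.X 1 ^ k := by
  simp [mono, h]

lemma one_ne (hm : 1 ≤ m) : (1 : Fin (m+1)) ≠ 0 := by
  intro h
  have := congrArg Fin.val h
  rw [Fin.val_one'] at this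
  simp at this
  omega

lemma phi_mono (hm : 1 ≤ m) {d k j : ℕ} (h : k ≤ d) :
    phi K m d j (mono K m d k) = if j = k then 1 else 0 := by
  rw [phi_apply, mono_coe h]
  simp [rho, one_ne hm, Polynomial.coeff_X_pow]

lemma phi_ne_zero (hm : 1 ≤ m) {d a : ℕ} (h : a ≤ d) : phi K m d a ≠ 0 := by
  intro h0
  have := phi_mono (K := K) hm (j := a) h
  rw [h0] at this
  simp at this

lemma poly_curve {V ι : Type} [AddCommGroup V] [Module K V] {F : V → K}
    (hF : F ∈ polyFunctions K V) (I : Finset ι) (q : ι → Polynomial K) (w : ι → V) :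
    ∃ p : Polynomial K, ∀ t, F (∑ j ∈ I, (q j).eval t • w j) = p.eval t := by
  unfold polyFunctions at hF
  induction hF using Algebra.adjoin_induction with
  | mem x hx =>
    obtain ⟨φ, rfl⟩ := hx
    refine ⟨∑ j ∈ I, Polynomial.C (φ (w j)) * q j, fun t => ?_⟩
    simp [Polynomial.eval_finsetSum, mul_comm]
  | algebraMap r => exact ⟨Polynomial.C r, fun t => by simp⟩
  | add x y _ _ h1 h2 =>
    obtain ⟨p1, h1⟩ := h1
    obtain ⟨p2, h2⟩ := h2
    exact ⟨p1 + p2, fun t => by simp [h1, h2]⟩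
  | mul x y _ _ h1 h2 =>
    obtain ⟨p1, h1⟩ := h1
    obtain ⟨p2, h2⟩ := h2
    exact ⟨p1 * p2, fun t => by simp [h1, h2]⟩

/-- for `N = d - a + 1` the functional `phi a` is a combination of `N` powers -/
lemma phi_eq [CharZero K] {d a N : ℕ} (hN : N = d - a + 1) (had : 2 * a ≤ d) {ζ : K}
    (hζ : IsPrimitiveRoot ζ N) :
    phi K m d a = (N : K)⁻¹ • ∑ k ∈ Finset.range N, (ζ ^ k) ^ (N - a) • nu d (vt m (ζ ^ k)) := by
  have h := sum_nu (m := m) d (a := a) hζ 1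
  simp only [one_mul, one_pow, mul_one] at h
  rw [h, Finset.sum_eq_single a]
  · have : N ∣ a + (N - a) := by rw [Nat.add_sub_cancel' (by omega)]
    rw [if_pos this, smul_smul, inv_mul_cancel₀, one_smul]
    rw [Nat.cast_ne_zero]; omega
  · intro j hj hja
    rw [if_neg, zero_smul]
    intro hdvd
    obtain ⟨l, hl⟩ := dvd_aux (by omega) hdvd
    rcases l with _ | l
    · omega
    · rw [mul_add] at hl
      simp at hj
      have : 0 ≤ N * l := Nat.zero_le _
      omega
  · intro h'; simp at h'; omega

lemma border_upper [IsAlgClosed K] [CharZero K] (hm : 1 ≤ m) {d a : ℕ} (hd : d ≠ 0) (had : a ≤ d) :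
    Projectivization.mk K (phi K m d a) (phi_ne_zero hm had) ∈ secantWrt (XSet K m d) (a+1) := by
  obtain ⟨ζ, hζ⟩ := HasEnoughRootsOfUnity.exists_primitiveRoot K (a+1)
  let q : ℕ → Polynomial K := fun j =>
    if (a+1) ∣ j + (a + 1 - a) then Polynomial.X ^ (j - a) else 0
  let x : K → Module.Dual K (Hd K m d) := fun t =>
    ∑ j ∈ Finset.range (d+1), (q j).eval t • phi K m d j
  have hx0 : x 0 = phi K m d a := by
    simp only [x]
    rw [Finset.sum_eq_single a]
    · simp [q]
    · intro j hj hja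
      simp only [q]
      split_ifs with h
      · obtain ⟨l, hl⟩ := dvd_aux (by omega) h
        have : j - a ≠ 0 := by omega
        simp [this]
      · simp
    · intro h'; simp at h'; omega
  have hxne : ∀ t, x t ≠ 0 := by
    intro t h0
    have : x t (mono K m d a) = 1 := by
      simp only [x, LinearMap.sum_apply, LinearMap.smul_apply, phi_mono hm had]
      rw [Finset.sum_eq_single a]
      · simp [q]
      · intro j _ hj; simp [hj]
      · intro h'; simp at h'; omega
    rw [h0] at this
    simp at this
  have hxt : ∀ t, t ≠ 0 → x t = (((a+1 : ℕ) : K) * t ^ a)⁻¹ •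
      ∑ k ∈ Finset.range (a+1), (ζ ^ k) ^ (a + 1 - a) • nu d (vt m (t * ζ ^ k)) := by
    intro t ht
    rw [sum_nu d hζ t, Finset.smul_sum]
    refine Finset.sum_congr rfl fun j _ => ?_
    rw [smul_smul]
    congr 1
    simp only [q]
    split_ifs with h
    · obtain ⟨l, hl⟩ := dvd_aux (by omega) h
      have hN : ((a+1 : ℕ) : K) ≠ 0 := Nat.cast_ne_zero.2 (by omega)
      have : t ^ j = t ^ a * t ^ (j - a) := by rw [← pow_add]; congr 1; omega
      rw [this, Polynomial.eval_pow, Polynomial.eval_X]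
      field_simp
    · simp
  intro F hF hT c
  have hFx : ∀ (c t : K), t ≠ 0 → F (c • x t) = 0 := by
    intro c t ht
    obtain ⟨e, he⟩ := eq_smul_mk_rep (K := K) (hxne t)
    rw [he, smul_smul]
    refine hT _ ?_ _
    obtain ⟨S, h1, h2, h3⟩ := exists_finset (m := m) hd ⊤ (Finset.range (a+1))
      (fun k => vt m (t * ζ ^ k)) (by simp)
    refine ⟨S, by rwa [XSet_eq], by simpa using h2, mk_rep_mem _ _ ?_⟩
    rw [hxt t ht]
    exact Submodule.smul_mem _ _ (Submodule.sum_mem _ fun k hk => Submodule.smul_mem _ _ (h3 k hk))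
  have hF0 : ∀ c : K, F (c • x 0) = 0 := by
    intro c
    obtain ⟨p, hp⟩ := poly_curve hF (Finset.range (d+1)) q (fun j => c • phi K m d j)
    have hp' : ∀ t, F (c • x t) = p.eval t := by
      intro t
      rw [← hp t]
      simp only [x, Finset.smul_sum, smul_comm c]
    have : p = 0 := by
      apply Polynomial.eq_zero_of_infinite_isRoot
      refine Set.Infinite.mono ?_ (Set.Infinite.sdiff Set.infinite_univ (Set.finite_singleton (0 : K)))
      intro t ht
      change p.eval t = 0
      rw [← hp']
      exact hFx c t (by simpa using ht)
    rw [hp', this]; simp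
  obtain ⟨e, he⟩ := Projectivization.exists_smul_eq_mk_rep K (phi K m d a) (phi_ne_zero hm had)
  rw [← he, Units.smul_def, smul_smul, ← hx0]
  exact hF0 _

lemma nu_mono {d k : ℕ} (h : k ≤ d) (v : Fin (m+1) → K) :
    nu d v (mono K m d k) = v 0 ^ (d - k) * v 1 ^ k := by
  rw [nu_apply, mono_coe h]; simp

/-- catalecticant -/
noncomputable def cat (K : Type) [Field K] (m d a : ℕ) (φ : Module.Dual K (Hd K m d)) :
    Matrix (Fin (a+1)) (Fin (a+1)) K := Matrix.of fun i j => φ (mono K m d (i + j))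

lemma border_lower (hm : 1 ≤ m) {d a s : ℕ} (had : 2 * a ≤ d)
    (h : Projectivization.mk K (phi K m d a) (phi_ne_zero hm (by omega)) ∈
      secantWrt (XSet K m d) s) : a + 1 ≤ s := by
  by_contra hs
  have hF : (fun φ => (cat K m d a φ).det) ∈ polyFunctions K (Module.Dual K (Hd K m d)) := by
    have : (fun φ => (cat K m d a φ).det) = ∑ σ : Equiv.Perm (Fin (a+1)),
        (((Equiv.Perm.sign σ : ℤ) : K)) • ∏ i,
          (fun φ : Module.Dual K (Hd K m d) => φ (mono K m d ((σ i : Fin (a+1)) + i : ℕ))) := by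
      funext φ
      rw [Matrix.det_apply']
      simp [cat, Finset.sum_apply, Finset.prod_apply]
    rw [this]
    refine Subalgebra.sum_mem _ fun σ _ => Subalgebra.smul_mem _ (Subalgebra.prod_mem _ ?_) _
    intro i _
    exact Algebra.subset_adjoin ⟨Module.Dual.eval K _ (mono K m d _), rfl⟩
  obtain ⟨e, he⟩ := eq_smul_mk_rep (K := K) (phi_ne_zero (K := K) hm (show a ≤ d by omega))
  have key := h _ hF ?_ e
  · simp only [← he] at key
    obtain ⟨u, hu, hMu⟩ := Matrix.exists_mulVec_eq_zero_iff.2 key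
    apply hu
    funext i
    have := congrFun hMu i.rev
    rw [Matrix.mulVec, dotProduct, Finset.sum_eq_single i] at this
    · simp only [cat, Matrix.of_apply] at this
      rw [phi_mono hm (by have := i.2; have := i.rev.2; omega)] at this
      rw [if_pos (by rw [Fin.val_rev]; have := i.2; omega)] at this
      simpa using this
    · intro j _ hj
      simp only [cat, Matrix.of_apply]
      rw [phi_mono hm (by have := j.2; have := i.rev.2; omega), if_neg, zero_mul]
      intro h'
      apply hj
      ext
      rw [Fin.val_rev] at h'
      have := i.2
      omega
    · simp
  · rintro Q ⟨S, h1, h2, h3⟩ c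
    have hS' : ∀ q : S, ∃ v : Fin (m+1) → K, ∃ c : K, q.1.rep = c • nu d v := by
      intro q
      have := h1 q.2
      rw [XSet_eq] at this
      obtain ⟨v, -, c, h⟩ := exists_of_nuSet this
      exact ⟨v, c, h⟩
    choose v b hv using hS'
    let A : (Fin (a+1) → K) →ₗ[K] (S → K) :=
      Matrix.mulVecLin (Matrix.of fun q j => v q 0 ^ (a - (j : ℕ)) * v q 1 ^ (j : ℕ))
    obtain ⟨u, hu, hu0⟩ : ∃ u, A u = 0 ∧ u ≠ 0 := by
      have : LinearMap.ker A ≠ ⊥ := LinearMap.ker_ne_bot_of_finrank_lt (by simp; omega)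
      obtain ⟨u, hu, hu0⟩ := Submodule.exists_mem_ne_zero_of_ne_bot this
      exact ⟨u, hu, hu0⟩
    apply Matrix.exists_mulVec_eq_zero_iff.1
    refine ⟨u, hu0, ?_⟩
    let B : Module.Dual K (Hd K m d) →ₗ[K] (Fin (a+1) → K) :=
      { toFun := fun φ => Matrix.mulVec (cat K m d a φ) u
        map_add' := by
          intro φ ψ; rw [← Matrix.add_mulVec]; rfl
        map_smul' := by
          intro c φ; rw [RingHom.id_apply, ← Matrix.smul_mulVec]; rfl }
    have hB : Submodule.span K (Projectivization.rep '' (S : Set (PN K m d))) ≤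
        LinearMap.ker B := by
      rw [Submodule.span_le]
      rintro _ ⟨q, hq, rfl⟩
      rw [SetLike.mem_coe, LinearMap.mem_ker, hv ⟨q, hq⟩, map_smul]
      convert smul_zero _
      funext i
      have h0 := congrFun hu ⟨q, hq⟩
      change ∑ j : Fin (a+1), nu d (v ⟨q, hq⟩) (mono K m d ((i : ℕ) + (j : ℕ))) * u j = 0
      change ∑ j : Fin (a+1), v ⟨q, hq⟩ 0 ^ (a - (j : ℕ)) * v ⟨q, hq⟩ 1 ^ (j : ℕ) * u j = 0 at h0
      calc _ = v ⟨q, hq⟩ 0 ^ (d - a - i) * v ⟨q, hq⟩ 1 ^ (i : ℕ) *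
            ∑ j : Fin (a+1), v ⟨q, hq⟩ 0 ^ (a - (j : ℕ)) * v ⟨q, hq⟩ 1 ^ (j : ℕ) * u j := by
            rw [Finset.mul_sum]
            refine Finset.sum_congr rfl fun j _ => ?_
            have hi := i.2
            have hj := j.2
            rw [nu_mono (by omega)]
            have : d - (i + j : ℕ) = (d - a - i) + (a - j) := by omega
            rw [this, pow_add, pow_add]; ring
        _ = 0 := by rw [h0, mul_zero]
    exact hB (Submodule.smul_mem _ c h3)

lemma rank_lower (hm : 1 ≤ m) {d a : ℕ} (ha : a ≠ 0) (S : Finset (PN K m d))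
    (had : a ≤ d)
    (hS : ↑S ⊆ XSet K m d)
    (h : phi K m d a ∈ Submodule.span K (Projectivization.rep '' (S : Set (PN K m d)))) :
    d - a + 1 ≤ S.card := by
  classical
  by_contra hlt
  have hS' : ∀ q : PN K m d, ∃ v : Fin (m+1) → K, q ∈ S → ∃ c : K, q.rep = c • nu d v := by
    intro q
    by_cases hq : q ∈ S
    · have := hS hq
      rw [XSet_eq] at this
      obtain ⟨v, -, c, h⟩ := exists_of_nuSet this
      exact ⟨v, fun _ => ⟨c, h⟩⟩
    · exact ⟨0, fun h => absurd h hq⟩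
  choose v hv using hS'
  let T := S.filter (fun q => v q 1 ≠ 0)
  have hT : T.card ≤ S.card := Finset.card_filter_le _ _
  let G : PR K m := MvPolynomial.X 1 ^ a * MvPolynomial.X 0 ^ (d - a - T.card) *
    ∏ q ∈ T, (MvPolynomial.C (v q 1) * MvPolynomial.X 0 - MvPolynomial.C (v q 0) * MvPolynomial.X 1)
  have hG : G ∈ Hd K m d := by
    have h1 := (((MvPolynomial.isHomogeneous_X K (1 : Fin (m+1))).pow a).mul
      ((MvPolynomial.isHomogeneous_X K (0 : Fin (m+1))).pow (d - a - T.card))).mul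
      (MvPolynomial.IsHomogeneous.prod T (fun q => MvPolynomial.C (v q 1) * MvPolynomial.X 0 -
        MvPolynomial.C (v q 0) * MvPolynomial.X 1) (fun _ => 1) (fun q _ => by
          have g1 := (MvPolynomial.isHomogeneous_C (Fin (m+1)) (v q 1)).mul
            (MvPolynomial.isHomogeneous_X K (0 : Fin (m+1)))
          have g2 := (MvPolynomial.isHomogeneous_C (Fin (m+1)) (v q 0)).mul
            (MvPolynomial.isHomogeneous_X K (1 : Fin (m+1)))
          rw [zero_add] at g1 g2
          exact g1.sub g2))
    have h2 : 1 * a + 1 * (d - a - T.card) + ∑ q ∈ T, 1 = d := by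
      rw [Finset.sum_const, smul_eq_mul]; omega
    rw [h2] at h1
    exact h1
  have hker : Submodule.span K (Projectivization.rep '' (S : Set (PN K m d))) ≤
      LinearMap.ker (Module.Dual.eval K _ (⟨G, hG⟩ : Hd K m d)) := by
    rw [Submodule.span_le]
    rintro _ ⟨q, hq, rfl⟩
    obtain ⟨c, hc⟩ := hv q hq
    rw [SetLike.mem_coe, LinearMap.mem_ker, hc, map_smul, Module.Dual.eval_apply, nu_apply]
    convert smul_zero _
    simp only [G, map_mul, map_pow, MvPolynomial.aeval_X, map_prod]
    by_cases h0 : v q 1 = 0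
    · rw [h0, zero_pow ha]; ring
    · rw [Finset.prod_eq_zero (i := q) (Finset.mem_filter.2 ⟨hq, h0⟩), mul_zero]
      simp; ring
  have h0 := hker h
  rw [LinearMap.mem_ker, Module.Dual.eval_apply, phi_apply] at h0
  have : rho K m G = Polynomial.X ^ a *
      ∏ q ∈ T, (Polynomial.C (v q 1) - Polynomial.C (v q 0) * Polynomial.X) := by
    simp [G, rho, one_ne hm, MvPolynomial.algHom_C]
  simp only at h0
  rw [this, Polynomial.coeff_X_pow_mul', if_pos le_rfl, Nat.sub_self,
    Polynomial.coeff_zero_eq_eval_zero, Polynomial.eval_prod, Finset.prod_eq_zero_iff] at h0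
  obtain ⟨q, hq, h0⟩ := h0
  simp at h0
  exact (Finset.mem_filter.1 hq).2 h0

lemma part1 [IsAlgClosed K] [CharZero K] {s d : ℕ} (hm : 1 ≤ m) (hs : 2 ≤ s)
    (hd : 2 * s ≤ d + 1) :
    ∃ L : Set (Pm K m), IsLine L ∧
      ∃ P ∈ sigmaSet K m d s (d + 2 - s), inSpanSet d L P := by
  obtain ⟨a, rfl⟩ : ∃ a, s = a + 1 := ⟨s - 1, by omega⟩
  have had : a ≤ d := by omega
  have hd0 : d ≠ 0 := by omega
  let e0 : Fin (m+1) → K := Pi.single 0 1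
  let e1 : Fin (m+1) → K := Pi.single 1 1
  let W : Submodule K (Fin (m+1) → K) := Submodule.span K (Set.range ![e0, e1])
  have hW : Module.finrank K W = 2 := by
    have : LinearIndependent K ![e0, e1] := by
      rw [LinearIndependent.pair_iff]
      intro x y hxy
      have h0 := congrFun hxy 0
      have h1 := congrFun hxy 1
      simp [e0, e1, Pi.single_apply, one_ne hm, (one_ne hm).symm] at h0 h1
      exact ⟨h0, h1⟩
    simpa using finrank_span_eq_card this
  have hvt : ∀ t : K, vt m t ∈ W := by
    intro t
    have : vt m t = e0 + t • e1 := by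
      funext i
      simp only [vt, e0, e1, Pi.add_apply, Pi.smul_apply, Pi.single_apply, smul_eq_mul]
      have := one_ne hm
      split_ifs <;> simp_all
    rw [this]
    exact W.add_mem (Submodule.subset_span ⟨0, rfl⟩)
      (W.smul_mem _ (Submodule.subset_span ⟨1, rfl⟩))
  obtain ⟨ζ, hζ⟩ := HasEnoughRootsOfUnity.exists_primitiveRoot K (d - a + 1)
  have hphi := phi_eq (m := m) rfl (show 2 * a ≤ d by omega) hζ
  refine ⟨Lof W, ⟨W, hW, rfl⟩, Projectivization.mk K (phi K m d a) (phi_ne_zero hm had),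
    ⟨?_, ?_⟩, ?_⟩
  · have hmem : (a+1) ∈ {s | 0 < s ∧ Projectivization.mk K (phi K m d a) (phi_ne_zero hm had) ∈
        secantWrt (XSet K m d) s} := ⟨by omega, border_upper hm hd0 had⟩
    apply le_antisymm
    · exact Nat.sInf_le hmem
    · exact le_csInf ⟨_, hmem⟩ fun r hr => border_lower hm (by omega) hr.2
  · obtain ⟨S, h1, h2, h3⟩ := exists_finset (m := m) hd0 ⊤ (Finset.range (d - a + 1))
      (fun k => vt m (ζ ^ k)) (by simp)
    rw [← XSet_eq] at h1
    have hmem : S.card ∈ {r | ∃ S : Finset (PN K m d), ↑S ⊆ XSet K m d ∧ S.card = r ∧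
        (Projectivization.mk K (phi K m d a) (phi_ne_zero hm had)).rep ∈
          Submodule.span K (Projectivization.rep '' (S : Set (PN K m d)))} := by
      refine ⟨S, h1, rfl, mk_rep_mem _ _ ?_⟩
      rw [hphi]
      exact Submodule.smul_mem _ _ (Submodule.sum_mem _ fun k hk =>
        Submodule.smul_mem _ _ (h3 k hk))
    apply le_antisymm
    · refine (Nat.sInf_le hmem).trans (h2.trans ?_)
      simp; omega
    · refine le_csInf ⟨_, hmem⟩ ?_
      rintro r ⟨S', g1, rfl, g3⟩
      have := rank_lower hm (by omega) S' had g1 (mem_of_mk_rep_mem _ _ g3)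
      omega
  · refine mk_rep_mem _ _ ?_
    rw [hphi]
    exact Submodule.smul_mem _ _ (Submodule.sum_mem _ fun k _ =>
        Submodule.smul_mem _ _ (nu_mem_dualSpan (vt_ne_zero _) (hvt _)))

end helpers

/-- `σ_{s,d-s+2}(X_{m,d}) ≠ ∅`, witnessed by points in the span of `ν_d(L)` for a line
`L ⊂ ℙ^m`; moreover, for any line `L` and any `P ∈ ⟨ν_d(L)⟩` the symmetric rank and border
rank of `P` with respect to `X_{m,d}` coincide with those with respect to the rational normal
curve `ν_d(L) ≅ X_{1,d}`. -/
theorem stmt13 (K : Type) [Field K] [IsAlgClosed K] [CharZero K]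
    (m s d : ℕ) (hm : 1 ≤ m) (hs : 2 ≤ s) (hd : 2 * s ≤ d + 1) :
    (∃ L : Set (Pm K m), IsLine L ∧
      ∃ P ∈ sigmaSet K m d s (d + 2 - s), inSpanSet d L P) ∧
    (∀ L : Set (Pm K m), IsLine L → ∀ P : PN K m d, inSpanSet d L P →
      srank d P = rankWrt (nuSet d L) P ∧ brank d P = brankWrt (nuSet d L) P) := by
  exact ⟨part1 hm hs hd, fun L hL P hP => part2 (by omega) L hL P hP⟩
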